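/- arXiv:2008.08499 — 7 statements merged into one kernel-verified Lean document; each statement's English description precedes it below -/
import Mathlib

section
/- Let n, m, a, b, c be natural numbers with b ≥ 1 and c ≥ 1. Let M and N be real matrices with rows indexed by Fin n ⊕ Fin m and columns indexed by Fin a, all of whose entries lie in {0,1}, such that in each of M and N: every column, restricted to the rows indexed by Fin n, sums to 1; every column, restricted to the rows indexed by Fin m, sums to 1; every row indexed by Fin n sums to b; and every row indexed by Fin m sums to c (so M and N are incidence matrices of (b,c)-biregular bipartite graphs with parts of sizes n and m). Then M ≡ N. -/
/-!
The witnesses are the uniform averaging matrices: `S₁` is block diagonal with blocks all of whose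
entries are `1/n` and `1/m`, and `S₂` has all entries `1/a`. Each entry of either product in the
two required identities is then a normalised row sum or column sum: in the rows of `Fin n` one side
is `1/n` and the other `b/a`, in the rows of `Fin m` they are `1/m` and `c/a`. These agree because
counting the ones of a block by rows and by columns gives `a = n * b = m * c`
(`card_cols_eq`, `inv_card_eq`).
-/

open Matrix

/-- A real square matrix is doubly stochastic if all its entries are nonnegative and
each of its rows and each of its columns sums to 1. -/
def DoublyStochastic {n : Type*} [Fintype n] (S : Matrix n n ℝ) : Prop :=
  (∀ i j, 0 ≤ S i j) ∧ (∀ i, ∑ j, S i j = 1) ∧ (∀ j, ∑ i, S i j = 1)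

/-- Fractional isomorphism of hypergraphs given by their incidence matrices. -/
def FracIso {n m : Type*} [Fintype n] [Fintype m] (M N : Matrix n m ℝ) : Prop :=
  ∃ (S₁ : Matrix n n ℝ) (S₂ : Matrix m m ℝ),
    DoublyStochastic S₁ ∧ DoublyStochastic S₂ ∧
    S₁ * M = N * S₂ᵀ ∧ M * S₂ = S₁ᵀ * N

/-- Double counting: row sums `d` and column sums `1` force `a = k * d`. -/
lemma card_cols_eq {k a d : ℕ} (A : Fin k → Fin a → ℝ)
    (hcol : ∀ j, ∑ i, A i j = 1) (hrow : ∀ i, ∑ j, A i j = d) : (a : ℝ) = k * d := by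
  have h := Finset.sum_comm (s := Finset.univ) (t := Finset.univ) (f := A)
  simp only [hcol, hrow] at h
  simpa using h.symm

/-- The index `i` witnesses `k ≠ 0`, so no division by zero occurs. -/
lemma inv_card_eq {k a d : ℕ} (hd : 1 ≤ d) (h : (a : ℝ) = k * d) (i : Fin k) :
    (k : ℝ)⁻¹ = d * (a : ℝ)⁻¹ := by
  have hk : (k : ℝ) ≠ 0 := by exact_mod_cast i.pos.ne'
  have hd0 : (d : ℝ) ≠ 0 := by exact_mod_cast (by omega : d ≠ 0)
  rw [h]
  field_simp

lemma card_mul_inv {k : ℕ} (i : Fin k) : (k : ℝ) * (k : ℝ)⁻¹ = 1 :=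
  mul_inv_cancel₀ (by exact_mod_cast i.pos.ne')

theorem biregular_bipartite_frac_iso (n m a b c : ℕ) (hb : 1 ≤ b) (hc : 1 ≤ c)
    (M N : Matrix (Fin n ⊕ Fin m) (Fin a) ℝ)
    (hM01 : ∀ i j, M i j = 0 ∨ M i j = 1) (hN01 : ∀ i j, N i j = 0 ∨ N i j = 1)
    (hMcol₁ : ∀ j, ∑ i : Fin n, M (Sum.inl i) j = 1)
    (hNcol₁ : ∀ j, ∑ i : Fin n, N (Sum.inl i) j = 1)
    (hMcol₂ : ∀ j, ∑ i : Fin m, M (Sum.inr i) j = 1)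
    (hNcol₂ : ∀ j, ∑ i : Fin m, N (Sum.inr i) j = 1)
    (hMrow₁ : ∀ i : Fin n, ∑ j, M (Sum.inl i) j = b)
    (hNrow₁ : ∀ i : Fin n, ∑ j, N (Sum.inl i) j = b)
    (hMrow₂ : ∀ i : Fin m, ∑ j, M (Sum.inr i) j = c)
    (hNrow₂ : ∀ i : Fin m, ∑ j, N (Sum.inr i) j = c) :
    FracIso M N := by
  have h₁ := card_cols_eq (fun i j => M (Sum.inl i) j) hMcol₁ hMrow₁
  have h₂ := card_cols_eq (fun i j => M (Sum.inr i) j) hMcol₂ hMrow₂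
  refine ⟨fromBlocks (of fun _ _ => (n : ℝ)⁻¹) 0 0 (of fun _ _ => (m : ℝ)⁻¹),
    of fun _ _ => (a : ℝ)⁻¹, ⟨?_, ?_, ?_⟩, ⟨?_, ?_, ?_⟩, ?_, ?_⟩
  · rintro (i | i) (j | j) <;> simp
  · rintro (i | i) <;> simp [card_mul_inv i]
  · rintro (i | i) <;> simp [card_mul_inv i]
  · intro i j
    simp
  · intro i
    simp [card_mul_inv i]
  · intro i
    simp [card_mul_inv i]
  · ext (i | i) j
    · simp [mul_apply, ← Finset.mul_sum, ← Finset.sum_mul, hMcol₁, hNrow₁, inv_card_eq hb h₁ i]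
    · simp [mul_apply, ← Finset.mul_sum, ← Finset.sum_mul, hMcol₂, hNrow₂, inv_card_eq hc h₂ i]
  · ext (i | i) j
    · simp [mul_apply, ← Finset.mul_sum, ← Finset.sum_mul, hNcol₁, hMrow₁, inv_card_eq hb h₁ i]
    · simp [mul_apply, ← Finset.mul_sum, ← Finset.sum_mul, hNcol₂, hMrow₂, inv_card_eq hc h₂ i]
end

section
/- Let v1, v2, D11, D22, D12, D21, a1, a2, a12 be natural numbers with 2*a1 = v1*D11, 2*a2 = v2*D22, and a12 = v1*D12 = v2*D21. Let M and N be real matrices with rows indexed by Fin v1 ⊕ Fin v2 and columns indexed by (Fin a1 ⊕ Fin a2) ⊕ Fin a12, all entries in {0,1}, such that in each of M and N: all entries in rows from Fin v2 and columns from Fin a1 are 0; all entries in rows from Fin v1 and columns from Fin a2 are 0; every column from Fin a1 sums to 2 and every row from Fin v1, restricted to columns from Fin a1, sums to D11; every column from Fin a2 sums to 2 and every row from Fin v2, restricted to columns from Fin a2, sums to D22; every column from Fin a12, restricted to rows from Fin v1, sums to 1, and restricted to rows from Fin v2, sums to 1; every row from Fin v1, restricted to columns from Fin a12, sums to D12,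 and every row from Fin v2, restricted to columns from Fin a12, sums to D21. (That is, M and N are incidence matrices of graphs having a common equitable partition into two parts of sizes v1, v2 with degree parameters D11, D12, D21, D22.) Then M ≡ N. -/
/-!
Averaging over the parts of the common equitable partition gives the fractional isomorphism:
`S₁` is block diagonal with blocks `J / v1`, `J / v2`, and `S₂` is block diagonal with blocks
`J / a1`, `J / a2`, `J / a12`, where `J` is the all-ones matrix. On each block, the entries of
`S₁ * M` and `S₁ᵀ * N` are a constant column sum divided by the number of rows, those of
`N * S₂ᵀ` and `M * S₂` a constant row sum divided by the number of columns. These agree by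
double counting (`inv_mul_eq_of_double_count`), which is what the relations between the sizes
and the degrees say.
-/

open Matrix

/-- The `k × k` matrix with all entries `1 / k`. -/
noncomputable def avgMatrix (k : ℕ) : Matrix (Fin k) (Fin k) ℝ := fun _ _ => (k : ℝ)⁻¹

lemma doublyStochastic_avgMatrix (k : ℕ) : DoublyStochastic (avgMatrix k) := by
  have h (i : Fin k) : (k : ℝ) ≠ 0 := by
    have := i.pos
    positivity
  refine ⟨fun i j => by unfold avgMatrix; positivity, fun i => ?_, fun i => ?_⟩ <;>
    simp [avgMatrix, h i]

lemma DoublyStochastic.fromBlocks {n m : Type*} [Fintype n] [Fintype m]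
    {A : Matrix n n ℝ} {B : Matrix m m ℝ} (hA : DoublyStochastic A) (hB : DoublyStochastic B) :
    DoublyStochastic (Matrix.fromBlocks A 0 0 B) := by
  obtain ⟨hA0, hA1, hA2⟩ := hA
  obtain ⟨hB0, hB1, hB2⟩ := hB
  refine ⟨?_, ?_, ?_⟩
  · rintro (i | i) (j | j) <;> simp [hA0, hB0]
  · rintro (i | i) <;> simp [hA1, hB1]
  · rintro (i | i) <;> simp [hA2, hB2]

/-- In a `v × a` block with column sums `c` and row sums `r`, the two averages `c / v` and `r / a`
agree. The indices `i`, `j` only witness that the block is nonempty. -/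
lemma inv_mul_eq_of_double_count {v a c r : ℕ} (i : Fin v) (j : Fin a) (h : c * a = v * r) :
    (v : ℝ)⁻¹ * c = r * (a : ℝ)⁻¹ := by
  have hv := i.pos
  have ha := j.pos
  have h' : (c : ℝ) * a = v * r := by exact_mod_cast h
  field_simp
  linarith

theorem two_part_equitable_frac_iso (v1 v2 D11 D22 D12 D21 a1 a2 a12 : ℕ)
    (ha1 : 2 * a1 = v1 * D11) (ha2 : 2 * a2 = v2 * D22)
    (ha12 : a12 = v1 * D12) (ha12' : a12 = v2 * D21)
    (M N : Matrix (Fin v1 ⊕ Fin v2) ((Fin a1 ⊕ Fin a2) ⊕ Fin a12) ℝ)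
    (hM01 : ∀ i j, M i j = 0 ∨ M i j = 1) (hN01 : ∀ i j, N i j = 0 ∨ N i j = 1)
    -- zero blocks
    (hMz1 : ∀ (i : Fin v2) (j : Fin a1), M (Sum.inr i) (Sum.inl (Sum.inl j)) = 0)
    (hNz1 : ∀ (i : Fin v2) (j : Fin a1), N (Sum.inr i) (Sum.inl (Sum.inl j)) = 0)
    (hMz2 : ∀ (i : Fin v1) (j : Fin a2), M (Sum.inl i) (Sum.inl (Sum.inr j)) = 0)
    (hNz2 : ∀ (i : Fin v1) (j : Fin a2), N (Sum.inl i) (Sum.inl (Sum.inr j)) = 0)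
    -- block of internal edges of the first part
    (hMc1 : ∀ j : Fin a1, ∑ i : Fin v1, M (Sum.inl i) (Sum.inl (Sum.inl j)) = 2)
    (hNc1 : ∀ j : Fin a1, ∑ i : Fin v1, N (Sum.inl i) (Sum.inl (Sum.inl j)) = 2)
    (hMr1 : ∀ i : Fin v1, ∑ j : Fin a1, M (Sum.inl i) (Sum.inl (Sum.inl j)) = D11)
    (hNr1 : ∀ i : Fin v1, ∑ j : Fin a1, N (Sum.inl i) (Sum.inl (Sum.inl j)) = D11)
    -- block of internal edges of the second part
    (hMc2 : ∀ j : Fin a2, ∑ i : Fin v2, M (Sum.inr i) (Sum.inl (Sum.inr j)) = 2)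
    (hNc2 : ∀ j : Fin a2, ∑ i : Fin v2, N (Sum.inr i) (Sum.inl (Sum.inr j)) = 2)
    (hMr2 : ∀ i : Fin v2, ∑ j : Fin a2, M (Sum.inr i) (Sum.inl (Sum.inr j)) = D22)
    (hNr2 : ∀ i : Fin v2, ∑ j : Fin a2, N (Sum.inr i) (Sum.inl (Sum.inr j)) = D22)
    -- block of edges joining the two parts
    (hMc12a : ∀ j : Fin a12, ∑ i : Fin v1, M (Sum.inl i) (Sum.inr j) = 1)
    (hNc12a : ∀ j : Fin a12, ∑ i : Fin v1, N (Sum.inl i) (Sum.inr j) = 1)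
    (hMc12b : ∀ j : Fin a12, ∑ i : Fin v2, M (Sum.inr i) (Sum.inr j) = 1)
    (hNc12b : ∀ j : Fin a12, ∑ i : Fin v2, N (Sum.inr i) (Sum.inr j) = 1)
    (hMr12a : ∀ i : Fin v1, ∑ j : Fin a12, M (Sum.inl i) (Sum.inr j) = D12)
    (hNr12a : ∀ i : Fin v1, ∑ j : Fin a12, N (Sum.inl i) (Sum.inr j) = D12)
    (hMr12b : ∀ i : Fin v2, ∑ j : Fin a12, M (Sum.inr i) (Sum.inr j) = D21)
    (hNr12b : ∀ i : Fin v2, ∑ j : Fin a12, N (Sum.inr i) (Sum.inr j) = D21) :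
    FracIso M N := by
  have e1 (i : Fin v1) (j : Fin a1) := inv_mul_eq_of_double_count i j ha1
  have e2 (i : Fin v2) (j : Fin a2) := inv_mul_eq_of_double_count i j ha2
  have e3 (i : Fin v1) (j : Fin a12) :=
    inv_mul_eq_of_double_count i j ((one_mul a12).trans ha12)
  have e4 (i : Fin v2) (j : Fin a12) :=
    inv_mul_eq_of_double_count i j ((one_mul a12).trans ha12')
  push_cast at e1 e2 e3 e4
  refine ⟨fromBlocks (avgMatrix v1) 0 0 (avgMatrix v2),
    fromBlocks (fromBlocks (avgMatrix a1) 0 0 (avgMatrix a2)) 0 0 (avgMatrix a12),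
    (doublyStochastic_avgMatrix _).fromBlocks (doublyStochastic_avgMatrix _),
    ((doublyStochastic_avgMatrix _).fromBlocks (doublyStochastic_avgMatrix _)).fromBlocks
      (doublyStochastic_avgMatrix _), ?_, ?_⟩
  · ext (i | i) ((j | j) | j) <;>
      simp only [mul_apply, transpose_apply, Fintype.sum_sum_type, fromBlocks_apply₁₁,
        fromBlocks_apply₁₂, fromBlocks_apply₂₁, fromBlocks_apply₂₂, avgMatrix, Matrix.zero_apply,
        zero_mul, mul_zero, Finset.sum_const_zero, add_zero, zero_add, ← Finset.mul_sum,
        ← Finset.sum_mul, hMz1, hMz2, hNz1, hNz2, hNr1, hMc1, hNr2, hMc2, hMc12a, hMc12b,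
        hNr12a, hNr12b]
    exacts [e1 i j, e3 i j, e2 i j, e4 i j]
  · ext (i | i) ((j | j) | j) <;>
      simp only [mul_apply, transpose_apply, Fintype.sum_sum_type, fromBlocks_apply₁₁,
        fromBlocks_apply₁₂, fromBlocks_apply₂₁, fromBlocks_apply₂₂, avgMatrix, Matrix.zero_apply,
        zero_mul, mul_zero, Finset.sum_const_zero, add_zero, zero_add, ← Finset.mul_sum,
        ← Finset.sum_mul, hMz1, hMz2, hNz1, hNz2, hMr1, hNc1, hMr2, hNc2, hNc12a, hNc12b,
        hMr12a, hMr12b]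
    exacts [(e1 i j).symm, (e3 i j).symm, (e2 i j).symm, (e4 i j).symm]
end

section
/- Let V be a finite type, let G and H be simple graphs on V, let m be a natural number, and let eG : Fin m ≃ E(G) and eH : Fin m ≃ E(H) be enumerations of their edge sets. Let M_G and M_H be the corresponding incidence matrices. If G and H are fractionally isomorphic, i.e., there exists a doubly stochastic matrix S indexed by V with A_G * S = S * A_H (where A_G, A_H are the real adjacency matrices), then there exist doubly stochastic matrices S₁ (indexed by V) and S₂ (indexed by Fin m) such that S₁ * M_G = M_H * S₂ᵀ and M_G * S₂ = S₁ᵀ * M_H. -/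
/-!
Fractional isomorphism passes from adjacency to incidence matrices through a common equitable
partition.

Join `g` (a vertex of `G`) to `h` (a vertex of `H`) when `S g h ≠ 0`, and colour the disjoint union
of the two vertex sets by the connected components of this relation. If `u = S v` and `v = Sᵀ u`,
then `∑ S g h (u g - v h)² = 0`, so `u` and `v` agree along the support of `S`
(`eq_of_stochastic_pair`). Applied to the vectors counting the neighbours of each colour, this gives
an equitable colouring with the same parameters on both sides (`exists_common_colouring`): colour
class `i` has `N i` vertices in both graphs, and every vertex of colour `i` has `c i j` neighbours
of colour `j`.

Then `S₁` averages over colour classes, and `S₂` averages over edges with the same pair of colours: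
for edges `ab` of `G` and `cd` of `H`, its entry is `(δ_ac δ_bd + δ_ad δ_bc) / D`, where `δ` compares
colours and `D = N i * c i j` is the number of ordered adjacent pairs coloured `(i, j)`, the colours
of `(a, b)`. For a monochromatic type the numerator `2` compensates for each edge being
counted twice in `D`. The two matrix identities are the same computation with `G` and `H` exchanged
(`sum_incMatrix_mul_edgeWeight`), and the row and column sums of `S₂` follow from them, since each
column of an incidence matrix sums to `2`.
-/


open Matrix

/-- The vertex-edge incidence matrix of a simple graph, given an enumeration of its edges. -/
def incMatrix {V : Type*} [Fintype V] [DecidableEq V] (G : SimpleGraph V)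
    (m : ℕ) (e : Fin m ≃ G.edgeSet) : Matrix V (Fin m) ℝ :=
  fun v i => if v ∈ (e i : Sym2 V) then 1 else 0

/-! ### The common equitable colouring -/

lemma eq_of_stochastic_pair {V : Type*} [Fintype V] (S : Matrix V V ℝ) (hS : DoublyStochastic S)
    (u v : V → ℝ) (hu : ∀ g, u g = ∑ h, S g h * v h) (hv : ∀ h, v h = ∑ g, S g h * u g)
    (g h : V) (hgh : S g h ≠ 0) : u g = v h := by
  obtain ⟨h0, hr, hc⟩ := hS
  have e1 : ∑ g, ∑ h, S g h * (u g * u g) = ∑ g, u g * u g := by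
    simp_rw [← Finset.sum_mul, hr, one_mul]
  have e2 : ∑ g, ∑ h, S g h * (v h * v h) = ∑ h, v h * v h := by
    rw [Finset.sum_comm]
    simp_rw [← Finset.sum_mul, hc, one_mul]
  have e3 : ∑ g, ∑ h, S g h * (u g * v h) = ∑ g, u g * u g := by
    refine Finset.sum_congr rfl fun g _ => ?_
    have : u g * u g = (∑ h, S g h * v h) * u g := by rw [← hu g]
    rw [this, Finset.sum_mul]
    exact Finset.sum_congr rfl fun h _ => by ring
  have e4 : ∑ g, ∑ h, S g h * (u g * v h) = ∑ h, v h * v h := by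
    rw [Finset.sum_comm]
    refine Finset.sum_congr rfl fun h _ => ?_
    have : v h * v h = (∑ g, S g h * u g) * v h := by rw [← hv h]
    rw [this, Finset.sum_mul]
    exact Finset.sum_congr rfl fun g _ => by ring
  have key : ∑ g, ∑ h, S g h * (u g - v h) ^ 2 = 0 := by
    have : ∀ g h, S g h * (u g - v h) ^ 2
        = S g h * (u g * u g) + S g h * (v h * v h) - 2 * (S g h * (u g * v h)) := by
      intros; ring
    simp_rw [this, Finset.sum_sub_distrib, Finset.sum_add_distrib, ← Finset.mul_sum]
    linarith
  have nn : ∀ g h, 0 ≤ S g h * (u g - v h) ^ 2 := fun g h => mul_nonneg (h0 g h) (sq_nonneg _)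
  have k1 := (Finset.sum_eq_zero_iff_of_nonneg
    (fun g _ => Finset.sum_nonneg fun h _ => nn g h)).1 key g (Finset.mem_univ g)
  have k2 := (Finset.sum_eq_zero_iff_of_nonneg (fun h _ => nn g h)).1 k1 h (Finset.mem_univ h)
  rcases mul_eq_zero.1 k2 with k | k
  · exact absurd k hgh
  · exact sub_eq_zero.1 (pow_eq_zero_iff (two_ne_zero)|>.1 k)

/-- Fractionally isomorphic graphs have equitable colourings with the same class sizes and the same
parameters `c i j`. -/
lemma exists_common_colouring.{u} {V : Type u} [Fintype V] [DecidableEq V]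
    (G H : SimpleGraph V) [DecidableRel G.Adj] [DecidableRel H.Adj]
    (S : Matrix V V ℝ) (hS : DoublyStochastic S)
    (hAdj : G.adjMatrix ℝ * S = S * H.adjMatrix ℝ) :
    ∃ (ι : Type u) (_ : DecidableEq ι) (p q : V → ι) (c : ι → ι → ℝ),
      (∀ i, (∑ a, if p a = i then (1 : ℝ) else 0) = ∑ a, if q a = i then (1 : ℝ) else 0) ∧
      (∀ a j, (∑ b, G.adjMatrix ℝ a b * if p b = j then 1 else 0) = c (p a) j) ∧
      (∀ a j, (∑ b, H.adjMatrix ℝ a b * if q b = j then 1 else 0) = c (q a) j) := by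
  classical
  let r : V ⊕ V → V ⊕ V → Prop := fun x y => ∃ g h, x = Sum.inl g ∧ y = Sum.inr h ∧ S g h ≠ 0
  let p : V → Quot r := fun g => Quot.mk r (Sum.inl g)
  let q : V → Quot r := fun h => Quot.mk r (Sum.inr h)
  have hpq : ∀ g h, S g h ≠ 0 → p g = q h := fun g h hgh => Quot.sound ⟨g, h, rfl, rfl, hgh⟩
  obtain ⟨h0, hr, hc⟩ := id hS
  let x : Quot r → V → ℝ := fun j g => if p g = j then 1 else 0
  let y : Quot r → V → ℝ := fun j h => if q h = j then 1 else 0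
  have hxy : ∀ j g h, S g h * x j g = S g h * y j h := by
    intro j g h
    by_cases hgh : S g h = 0
    · simp [hgh]
    · simp only [x, y, hpq g h hgh]
  have hx : ∀ j, x j = S *ᵥ y j := by
    intro j
    ext g
    simp only [mulVec, dotProduct, ← hxy, ← Finset.sum_mul, hr, one_mul]
  have hy : ∀ j, y j = Sᵀ *ᵥ x j := by
    intro j
    ext h
    simp only [mulVec, dotProduct, transpose_apply, hxy, ← Finset.sum_mul, hc, one_mul]
  have hAdj' : Sᵀ * G.adjMatrix ℝ = H.adjMatrix ℝ * Sᵀ := by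
    have := congrArg Matrix.transpose hAdj
    simpa [Matrix.transpose_mul, SimpleGraph.transpose_adjMatrix] using this
  have hu : ∀ j, G.adjMatrix ℝ *ᵥ x j = S *ᵥ (H.adjMatrix ℝ *ᵥ y j) := by
    intro j
    rw [mulVec_mulVec, ← hAdj, ← mulVec_mulVec, ← hx]
  have hv : ∀ j, H.adjMatrix ℝ *ᵥ y j = Sᵀ *ᵥ (G.adjMatrix ℝ *ᵥ x j) := by
    intro j
    rw [mulVec_mulVec, hAdj', ← mulVec_mulVec, ← hy]
  have hconst : ∀ j g h, S g h ≠ 0 →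
      (G.adjMatrix ℝ *ᵥ x j) g = (H.adjMatrix ℝ *ᵥ y j) h := by
    intro j g h hgh
    exact eq_of_stochastic_pair S hS _ _ (fun g => congrFun (hu j) g)
      (fun h => congrFun (hv j) h) g h hgh
  have hlift : ∀ j s t, r s t →
      Sum.elim (G.adjMatrix ℝ *ᵥ x j) (H.adjMatrix ℝ *ᵥ y j) s
        = Sum.elim (G.adjMatrix ℝ *ᵥ x j) (H.adjMatrix ℝ *ᵥ y j) t := by
    rintro j _ _ ⟨g, h, rfl, rfl, hgh⟩
    exact hconst j g h hgh
  refine ⟨Quot r, inferInstance, p, q, fun i j => Quot.lift _ (hlift j) i, ?_, fun a j => rfl,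
    fun a j => rfl⟩
  · intro j
    change ∑ a, x j a = ∑ a, y j a
    rw [hx j]
    simp only [mulVec, dotProduct]
    rw [Finset.sum_comm]
    simp_rw [← Finset.sum_mul, hc, one_mul]

/-! ### Sums against incidence matrices -/

/-- Summing a symmetric function over the edges at `v` amounts to summing over the neighbours
of `v`. -/
lemma sum_incMatrix_mul {V : Type*} [Fintype V] [DecidableEq V] (G : SimpleGraph V)
    [DecidableRel G.Adj] (m : ℕ) (e : Fin m ≃ G.edgeSet) (a b : Fin m → V)
    (hab : ∀ i, (e i : Sym2 V) = s(a i, b i)) (f : V → V → ℝ) (hf : ∀ x y, f x y = f y x) (v : V) :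
    ∑ i, incMatrix G m e v i * f (a i) (b i) = ∑ w, G.adjMatrix ℝ v w * f v w := by
  have h1 : ∀ i, incMatrix G m e v i * f (a i) (b i)
      = ∑ w, if (e i : Sym2 V) = s(v, w) then f v w else 0 := by
    intro i
    have hne : a i ≠ b i := by
      have := (e i).2
      rw [hab i] at this
      exact G.ne_of_adj this
    unfold incMatrix
    rw [hab i]
    by_cases hva : v = a i
    · rw [← hva] at hne ⊢
      rw [Finset.sum_eq_single (b i)]
      · simp
      · intro w _ hw
        rw [if_neg]
        simp [Ne.symm hw, Ne.symm hne]
      · simp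
    · by_cases hvb : v = b i
      · rw [← hvb] at hne ⊢
        rw [Finset.sum_eq_single (a i)]
        · simp [Sym2.eq_swap, hf]
        · intro w _ hw
          rw [if_neg]
          simp [Ne.symm hw, hne]
        · simp
      · simp [hva, hvb, Ne.symm hva, Ne.symm hvb]
  simp_rw [h1]
  rw [Finset.sum_comm]
  refine Finset.sum_congr rfl fun w _ => ?_
  rw [SimpleGraph.adjMatrix_apply]
  by_cases hvw : G.Adj v w
  · rw [Finset.sum_eq_single (e.symm ⟨s(v, w), hvw⟩)]
    · simp [hvw]
    · intro i _ hi
      rw [if_neg]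
      intro h
      exact hi (by rw [Equiv.eq_symm_apply]; exact Subtype.ext h)
    · simp
  · rw [if_neg hvw, zero_mul]
    refine Finset.sum_eq_zero fun i _ => if_neg fun h => hvw ?_
    have := (e i).2
    rwa [h] at this

lemma sum_mul_incMatrix {V : Type*} [Fintype V] [DecidableEq V] (G : SimpleGraph V)
    (m : ℕ) (e : Fin m ≃ G.edgeSet) (i : Fin m) (a b : V)
    (hab : (e i : Sym2 V) = s(a, b)) (f : V → ℝ) :
    ∑ v, f v * incMatrix G m e v i = f a + f b := by
  have hne : a ≠ b := by
    have := (e i).2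
    rw [hab] at this
    exact G.ne_of_adj this
  have : ∀ v, f v * incMatrix G m e v i
      = (if v = a then f v else 0) + (if v = b then f v else 0) := by
    intro v
    unfold incMatrix
    rw [hab]
    by_cases hva : v = a
    · subst hva; simp [hne]
    · by_cases hvb : v = b
      · subst hvb; simp [hva]
      · simp [hva, hvb]
  simp_rw [this, Finset.sum_add_distrib]
  simp

/-! ### Averaging over edges of a given colour type -/

/-- The entry of `S₂` for edges with ordered end colours `(i, j)` and `(k, l)`; `D i j` is the
number of ordered adjacent pairs coloured `(i, j)`. -/
noncomputable def edgeWeight {ι : Type*} [DecidableEq ι] (D : ι → ι → ℝ) (i j k l : ι) : ℝ :=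
  ((if k = i then 1 else 0) * (if l = j then 1 else 0)
    + (if l = i then 1 else 0) * (if k = j then 1 else 0)) / D i j

/-- Row `h` of the incidence matrix against the weights of colour type `(i, j)`. Every vertex of
colour `i` has `c i j` neighbours of colour `j`, so the factor `c i j` of the denominator cancels. -/
lemma sum_incMatrix_mul_edgeWeight {V ι : Type*} [Fintype V] [DecidableEq V] [DecidableEq ι]
    (H : SimpleGraph V) [DecidableRel H.Adj] (m : ℕ) (e : Fin m ≃ H.edgeSet) (a b : Fin m → V)
    (hab : ∀ i, (e i : Sym2 V) = s(a i, b i)) (q : V → ι) (N : ι → ℝ) (c : ι → ι → ℝ)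
    (hc : ∀ a j, (∑ b, H.adjMatrix ℝ a b * if q b = j then 1 else 0) = c (q a) j)
    (i j : ι) (hsymm : N i * c i j = N j * c j i) (hD : N i * c i j ≠ 0) (h : V) :
    ∑ k, incMatrix H m e h k * edgeWeight (fun i j => N i * c i j) i j (q (a k)) (q (b k))
      = (if q h = i then (N i)⁻¹ else 0) + (if q h = j then (N j)⁻¹ else 0) := by
  rw [sum_incMatrix_mul H m e a b hab
    (fun x y => edgeWeight (fun i j => N i * c i j) i j (q x) (q y))
    (fun x y => by unfold edgeWeight; ring)]
  have h1 : ∀ w, H.adjMatrix ℝ h w * edgeWeight (fun i j => N i * c i j) i j (q h) (q w)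
      = (if q h = i then 1 else 0) / (N i * c i j)
          * (H.adjMatrix ℝ h w * if q w = j then 1 else 0)
        + (if q h = j then 1 else 0) / (N i * c i j)
          * (H.adjMatrix ℝ h w * if q w = i then 1 else 0) := by
    intro w
    unfold edgeWeight
    ring
  simp_rw [h1, Finset.sum_add_distrib, ← Finset.mul_sum, hc]
  have hD' : N j * c j i ≠ 0 := hsymm ▸ hD
  have t1 : (if q h = i then (1 : ℝ) else 0) / (N i * c i j) * c (q h) j
      = if q h = i then (N i)⁻¹ else 0 := by
    split_ifs with hi
    · have := left_ne_zero_of_mul hD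
      have := right_ne_zero_of_mul hD
      rw [hi]; field_simp
    · simp
  have t2 : (if q h = j then (1 : ℝ) else 0) / (N i * c i j) * c (q h) i
      = if q h = j then (N j)⁻¹ else 0 := by
    rw [hsymm]
    split_ifs with hi
    · have := left_ne_zero_of_mul hD'
      have := right_ne_zero_of_mul hD'
      rw [hi]; field_simp
    · simp
  rw [t1, t2]

lemma edgeWeight_comm {ι : Type*} [DecidableEq ι] (D : ι → ι → ℝ) (hD : ∀ i j, D i j = D j i)
    (i j k l : ι) : edgeWeight D i j k l = edgeWeight D k l i j := by
  unfold edgeWeight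
  by_cases h1 : k = i <;> by_cases h2 : l = j <;> by_cases h3 : l = i <;> by_cases h4 : k = j <;>
    grind

lemma exists_endpoints {V : Type*} (G : SimpleGraph V) (m : ℕ) (e : Fin m ≃ G.edgeSet) :
    ∃ a b : Fin m → V, ∀ i, (e i : Sym2 V) = s(a i, b i) := by
  have : ∀ i, ∃ x : V × V, (e i : Sym2 V) = s(x.1, x.2) := by
    intro i
    induction h : (e i : Sym2 V) with
    | _ x y => exact ⟨(x, y), rfl⟩
  choose f hf using this
  exact ⟨fun i => (f i).1, fun i => (f i).2, hf⟩

/-- Both sides count the ordered adjacent pairs coloured `(i, j)`. -/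
lemma parameter_symm {V ι : Type*} [Fintype V] [DecidableEq V] [DecidableEq ι]
    (G : SimpleGraph V) [DecidableRel G.Adj] (p : V → ι) (c : ι → ι → ℝ)
    (hc : ∀ a j, (∑ b, G.adjMatrix ℝ a b * if p b = j then 1 else 0) = c (p a) j) (i j : ι) :
    (∑ a, if p a = i then (1 : ℝ) else 0) * c i j
      = (∑ a, if p a = j then (1 : ℝ) else 0) * c j i := by
  have key : ∀ i j, (∑ a, if p a = i then (1 : ℝ) else 0) * c i j
      = ∑ a, ∑ b, (if p a = i then (1 : ℝ) else 0)
          * (G.adjMatrix ℝ a b * if p b = j then 1 else 0) := by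
    intro i j
    rw [Finset.sum_mul]
    refine Finset.sum_congr rfl fun a _ => ?_
    rw [← Finset.mul_sum, hc]
    split_ifs with h
    · rw [h]
    · simp
  rw [key, key, Finset.sum_comm]
  refine Finset.sum_congr rfl fun a _ => Finset.sum_congr rfl fun b _ => ?_
  simp only [SimpleGraph.adjMatrix_apply, G.adj_comm b a]
  ring

lemma class_size_pos {V ι : Type*} [Fintype V] [DecidableEq ι] (p : V → ι) (a : V) :
    0 < ∑ b, if p b = p a then (1 : ℝ) else 0 :=
  Finset.sum_pos' (fun b _ => by split_ifs <;> norm_num) ⟨a, Finset.mem_univ a, by simp⟩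

lemma parameter_pos {V ι : Type*} [Fintype V] [DecidableEq V] [DecidableEq ι]
    (G : SimpleGraph V) [DecidableRel G.Adj] (p : V → ι) (c : ι → ι → ℝ)
    (hc : ∀ a j, (∑ b, G.adjMatrix ℝ a b * if p b = j then 1 else 0) = c (p a) j)
    (a b : V) (hab : G.Adj a b) : 0 < c (p a) (p b) := by
  rw [← hc]
  refine Finset.sum_pos' (fun x _ => ?_) ⟨b, Finset.mem_univ b, by simp [hab]⟩
  rw [SimpleGraph.adjMatrix_apply]
  split_ifs <;> norm_num

/-! ### The two doubly stochastic matrices -/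

theorem fracIso_adj_to_inc {V : Type*} [Fintype V] [DecidableEq V]
    (G H : SimpleGraph V) [DecidableRel G.Adj] [DecidableRel H.Adj]
    (m : ℕ) (eG : Fin m ≃ G.edgeSet) (eH : Fin m ≃ H.edgeSet)
    (S : Matrix V V ℝ) (hS : DoublyStochastic S)
    (hAdj : G.adjMatrix ℝ * S = S * H.adjMatrix ℝ) :
    ∃ (S₁ : Matrix V V ℝ) (S₂ : Matrix (Fin m) (Fin m) ℝ),
      DoublyStochastic S₁ ∧ DoublyStochastic S₂ ∧
      S₁ * incMatrix G m eG = incMatrix H m eH * S₂ᵀ ∧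
      incMatrix G m eG * S₂ = S₁ᵀ * incMatrix H m eH := by
  obtain ⟨ι, _, p, q, c, hN, hcG, hcH⟩ := exists_common_colouring G H S hS hAdj
  obtain ⟨a, b, hab⟩ := exists_endpoints G m eG
  obtain ⟨a', b', hab'⟩ := exists_endpoints H m eH
  set N : ι → ℝ := fun i => ∑ a, if p a = i then (1 : ℝ) else 0 with hNdef
  have hNq : ∀ i, N i = ∑ a, if q a = i then (1 : ℝ) else 0 := hN
  have hsymm : ∀ i j, N i * c i j = N j * c j i := parameter_symm G p c hcG
  have hNp : ∀ x, 0 < N (p x) := fun x => class_size_pos p x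
  have hNq0 : ∀ x, 0 < N (q x) := fun x => by rw [hNq]; exact class_size_pos q x
  have hN0 : ∀ i, 0 ≤ N i := fun i => Finset.sum_nonneg fun x _ => by split_ifs <;> norm_num
  have hDG : ∀ k, 0 < N (p (a k)) * c (p (a k)) (p (b k)) := fun k =>
    mul_pos (hNp _) (parameter_pos G p c hcG _ _ (by
      have := (eG k).2
      rwa [hab k] at this))
  have hDH : ∀ k, 0 < N (q (a' k)) * c (q (a' k)) (q (b' k)) := fun k =>
    mul_pos (hNq0 _) (parameter_pos H q c hcH _ _ (by
      have := (eH k).2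
      rwa [hab' k] at this))
  let S₁ : Matrix V V ℝ := fun h g => if q h = p g then (N (p g))⁻¹ else 0
  let S₂ : Matrix (Fin m) (Fin m) ℝ := fun k l =>
    edgeWeight (fun i j => N i * c i j) (p (a k)) (p (b k)) (q (a' l)) (q (b' l))
  have hS₁ : DoublyStochastic S₁ := by
    refine ⟨fun h g => ?_, fun h => ?_, fun g => ?_⟩
    · simp only [S₁]
      split_ifs
      · exact inv_nonneg.2 (hN0 _)
      · exact le_rfl
    · have : ∀ g, S₁ h g = (if p g = q h then 1 else 0) * (N (q h))⁻¹ := by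
        intro g
        simp only [S₁]
        by_cases hg : p g = q h
        · simp [hg]
        · simp [hg, Ne.symm hg]
      simp_rw [this, ← Finset.sum_mul]
      exact mul_inv_cancel₀ (hNq0 h).ne'
    · have : ∀ h, S₁ h g = (if q h = p g then 1 else 0) * (N (p g))⁻¹ := by
        intro h
        simp only [S₁]
        split_ifs <;> simp
      simp_rw [this, ← Finset.sum_mul, ← hNq]
      exact mul_inv_cancel₀ (hNp g).ne'
  have E1 : S₁ * incMatrix G m eG = incMatrix H m eH * S₂ᵀ := by
    ext h k
    rw [mul_apply, mul_apply, sum_mul_incMatrix G m eG k (a k) (b k) (hab k)]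
    exact (sum_incMatrix_mul_edgeWeight H m eH a' b' hab' q N c hcH _ _ (hsymm _ _)
      (hDG k).ne' h).symm
  have E2 : incMatrix G m eG * S₂ = S₁ᵀ * incMatrix H m eH := by
    ext g l
    rw [mul_apply, mul_apply, sum_mul_incMatrix H m eH l (a' l) (b' l) (hab' l)]
    simp only [S₂]
    simp_rw [edgeWeight_comm _ hsymm (p _) (p _)]
    rw [sum_incMatrix_mul_edgeWeight G m eG a b hab p N c hcG _ _ (hsymm _ _) (hDH l).ne' g]
    have : ∀ x, (if p g = q x then (N (q x))⁻¹ else 0) = S₁ᵀ g x := by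
      intro x
      rw [transpose_apply]
      simp only [S₁]
      by_cases hx : p g = q x
      · simp [hx]
      · simp [hx, Ne.symm hx]
    rw [this, this]
  refine ⟨S₁, S₂, hS₁, ⟨fun k l => ?_, fun k => ?_, fun l => ?_⟩, E1, E2⟩
  · simp only [S₂, edgeWeight]
    refine div_nonneg ?_ (hDG k).le
    split_ifs <;> norm_num
  -- Both sums are obtained by adding up a column of the corresponding matrix identity.
  · have h1 : ∑ h, (S₁ * incMatrix G m eG) h k = 2 := by
      simp_rw [mul_apply, sum_mul_incMatrix G m eG k (a k) (b k) (hab k),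
        Finset.sum_add_distrib, hS₁.2.2]
      norm_num
    have h2 : ∑ h, (incMatrix H m eH * S₂ᵀ) h k = ∑ l, 2 * S₂ k l := by
      simp_rw [mul_apply, transpose_apply]
      rw [Finset.sum_comm]
      refine Finset.sum_congr rfl fun l _ => ?_
      simp_rw [mul_comm _ (S₂ k l)]
      rw [sum_mul_incMatrix H m eH l (a' l) (b' l) (hab' l) (fun _ => S₂ k l)]
      ring
    rw [← E1, h1, ← Finset.mul_sum] at h2
    linarith
  · have h1 : ∑ g, (S₁ᵀ * incMatrix H m eH) g l = 2 := by
      simp_rw [mul_apply, sum_mul_incMatrix H m eH l (a' l) (b' l) (hab' l),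
        Finset.sum_add_distrib, transpose_apply, hS₁.2.1]
      norm_num
    have h2 : ∑ g, (incMatrix G m eG * S₂) g l = ∑ k, 2 * S₂ k l := by
      simp_rw [mul_apply]
      rw [Finset.sum_comm]
      refine Finset.sum_congr rfl fun k _ => ?_
      simp_rw [mul_comm _ (S₂ k l)]
      rw [sum_mul_incMatrix G m eG k (a k) (b k) (hab k) (fun _ => S₂ k l)]
      ring
    rw [E2, h1, ← Finset.mul_sum] at h2
    linarith
end

section
/- Let V be a finite type, let G and H be simple graphs on V, let m be a natural number, and let eG : Fin m ≃ E(G) and eH : Fin m ≃ E(H) be enumerations of their edge sets, with corresponding incidence matrices M_G and M_H. If there exist doubly stochastic matrices S₁ (indexed by V) and S₂ (indexed by Fin m) such that S₁ * M_G = M_H * S₂ᵀ and M_G * S₂ = S₁ᵀ * M_H, then G and H are fractionally isomorphic: there exists a doubly stochastic matrix S indexed by V with A_G * S = S * A_H, where A_G and A_H are the real adjacency matrices of G and H. -/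
/-!
Write `M_G M_Gᵀ = D_G + A_G`, where `D_G` is the diagonal matrix of degrees. The two hypotheses
combine to `S₁ M_G M_Gᵀ = M_H S₂ᵀ M_Gᵀ = M_H M_Hᵀ S₁`, so `S₁` intertwines `D_G + A_G` and
`D_H + A_H`. Applying the hypotheses to the all-ones vector shows that `S₁` sends the degree
vector of `G` to that of `H`, and `S₁ᵀ` sends it back. This forces `S₁ i j = 0` whenever the
degrees of `i` in `H` and of `j` in `G` differ (`diagonal_intertwine`), i.e. `S₁ D_G = D_H S₁`.
Hence `S₁ A_G = A_H S₁`, and `S₁ᵀ` is the required fractional isomorphism.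
-/

open Matrix

/-- The Gram matrix of the rows of the incidence matrix is the degree matrix plus the adjacency
matrix; the degrees appear as row sums of the incidence matrix. -/
lemma incMatrix_mul_transpose_eq {V : Type*} [Fintype V] [DecidableEq V]
    (G : SimpleGraph V) [DecidableRel G.Adj] (m : ℕ) (e : Fin m ≃ G.edgeSet) :
    incMatrix G m e * (incMatrix G m e)ᵀ =
      diagonal (incMatrix G m e *ᵥ 1) + G.adjMatrix ℝ := by
  ext a b
  by_cases hab : a = b
  · subst hab
    simp [mul_apply, incMatrix, mulVec, dotProduct, ← ite_and]
  · have key : ∀ i, incMatrix G m e a i * incMatrix G m e b i =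
        if (e i : Sym2 V) = s(a, b) then 1 else 0 := by
      intro i
      simp only [incMatrix, ← Sym2.mem_and_mem_iff hab]
      split_ifs <;> simp_all
    simp only [mul_apply, transpose_apply, key, Matrix.add_apply, diagonal_apply_ne _ hab,
      SimpleGraph.adjMatrix_apply, zero_add]
    by_cases hadj : G.Adj a b
    · have h : ∀ i, (e i : Sym2 V) = s(a, b) ↔ i = e.symm ⟨s(a, b), hadj⟩ := by
        intro i
        rw [Equiv.eq_symm_apply, Subtype.ext_iff]
      simp [h, hadj]
    · have h : ∀ i, (e i : Sym2 V) ≠ s(a, b) := by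
        intro i hi
        have h' := (e i).2
        rw [hi] at h'
        exact hadj h'
      simp [h, hadj]

/-- If a doubly stochastic `S` maps `x` to `y` and its transpose maps `y` to `x`, then `S` is
supported on the pairs `(i, j)` with `y i = x j`. The reason is that
`∑ i, ∑ j, S i j * (y i - x j) ^ 2 = ∑ y² - 2 yᵀ S x + ∑ x²` vanishes. -/
lemma diagonal_intertwine {V : Type*} [Fintype V] [DecidableEq V] {S : Matrix V V ℝ}
    (hS : DoublyStochastic S) {x y : V → ℝ} (hx : S *ᵥ x = y) (hy : Sᵀ *ᵥ y = x) :
    S * diagonal x = diagonal y * S := by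
  obtain ⟨hpos, hrow, hcol⟩ := hS
  have hx' : ∀ i, ∑ j, S i j * x j = y i := fun i => congrFun hx i
  have hy' : ∀ j, ∑ i, S i j * y i = x j := fun j => congrFun hy j
  have hyy : ∑ i, ∑ j, S i j * (y i * y i) = ∑ i, y i * y i := by
    simp [← Finset.sum_mul, hrow]
  have hxx : ∑ i, ∑ j, S i j * (x j * x j) = ∑ j, x j * x j := by
    rw [Finset.sum_comm]
    simp [← Finset.sum_mul, hcol]
  have hxy : ∑ i, ∑ j, S i j * (y i * x j) = ∑ i, y i * y i := by
    refine Finset.sum_congr rfl fun i _ => ?_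
    rw [← hx' i, Finset.mul_sum, hx' i]
    exact Finset.sum_congr rfl fun j _ => by ring
  have hxy' : ∑ i, ∑ j, S i j * (y i * x j) = ∑ j, x j * x j := by
    rw [Finset.sum_comm]
    refine Finset.sum_congr rfl fun j _ => ?_
    simp only [← mul_assoc]
    rw [← Finset.sum_mul, hy' j]
  have hsum : ∑ i, ∑ j, S i j * (y i - x j) ^ 2 = 0 := by
    have : ∑ i, ∑ j, S i j * (y i - x j) ^ 2 =
        ∑ i, ∑ j, S i j * (y i * y i) - 2 * ∑ i, ∑ j, S i j * (y i * x j)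
          + ∑ i, ∑ j, S i j * (x j * x j) := by
      simp only [Finset.mul_sum, ← Finset.sum_sub_distrib, ← Finset.sum_add_distrib]
      exact Finset.sum_congr rfl fun i _ => Finset.sum_congr rfl fun j _ => by ring
    linarith
  have hnn : ∀ i j, 0 ≤ S i j * (y i - x j) ^ 2 := fun i j =>
    mul_nonneg (hpos i j) (sq_nonneg _)
  ext i j
  rw [mul_diagonal, diagonal_mul]
  have h1 := (Finset.sum_eq_zero_iff_of_nonneg
    fun i _ => Finset.sum_nonneg fun j _ => hnn i j).1 hsum i (Finset.mem_univ i)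
  have h2 := (Finset.sum_eq_zero_iff_of_nonneg fun j _ => hnn i j).1 h1 j (Finset.mem_univ j)
  rcases mul_eq_zero.1 h2 with h | h
  · simp [h]
  · rw [sub_eq_zero.1 (pow_eq_zero_iff (two_ne_zero) |>.1 h), mul_comm]

theorem fracIso_inc_to_adj {V : Type*} [Fintype V] [DecidableEq V]
    (G H : SimpleGraph V) [DecidableRel G.Adj] [DecidableRel H.Adj]
    (m : ℕ) (eG : Fin m ≃ G.edgeSet) (eH : Fin m ≃ H.edgeSet)
    (S₁ : Matrix V V ℝ) (S₂ : Matrix (Fin m) (Fin m) ℝ)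
    (hS₁ : DoublyStochastic S₁) (hS₂ : DoublyStochastic S₂)
    (h1 : S₁ * incMatrix G m eG = incMatrix H m eH * S₂ᵀ)
    (h2 : incMatrix G m eG * S₂ = S₁ᵀ * incMatrix H m eH) :
    ∃ S : Matrix V V ℝ, DoublyStochastic S ∧
      G.adjMatrix ℝ * S = S * H.adjMatrix ℝ := by
  have hS₂row : S₂ *ᵥ 1 = 1 := by
    ext i
    simpa [mulVec, dotProduct] using hS₂.2.1 i
  have hS₂col : S₂ᵀ *ᵥ 1 = 1 := by
    ext i
    simpa [mulVec, dotProduct] using hS₂.2.2 i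
  have hdeg : S₁ * diagonal (incMatrix G m eG *ᵥ 1) =
      diagonal (incMatrix H m eH *ᵥ 1) * S₁ := by
    apply diagonal_intertwine hS₁
    · rw [mulVec_mulVec, h1, ← mulVec_mulVec, hS₂col]
    · rw [mulVec_mulVec, ← h2, ← mulVec_mulVec, hS₂row]
  have h2' : S₂ᵀ * (incMatrix G m eG)ᵀ = (incMatrix H m eH)ᵀ * S₁ := by
    simpa using congrArg transpose h2
  have hgram : S₁ * (incMatrix G m eG * (incMatrix G m eG)ᵀ) =
      incMatrix H m eH * (incMatrix H m eH)ᵀ * S₁ := by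
    rw [← Matrix.mul_assoc, h1, Matrix.mul_assoc, h2', Matrix.mul_assoc]
  rw [incMatrix_mul_transpose_eq, incMatrix_mul_transpose_eq, Matrix.mul_add, Matrix.add_mul,
    hdeg] at hgram
  refine ⟨S₁ᵀ, ⟨fun i j => hS₁.1 j i, hS₁.2.2, hS₁.2.1⟩, ?_⟩
  simpa using congrArg transpose (add_left_cancel hgram)
end

section
/- Let M_G and M_H be n×m real matrices with all entries in {0,1} such that M_G ≡ M_H. Then there exists a permutation σ of Fin n such that for every i, the sum of the i-th row of M_G equals the sum of the σ(i)-th row of M_H (the hypergraphs have the same degree sequence), and there exists a permutation π of Fin m such that for every j, the sum of the j-th column of M_G equals the sum of the π(j)-th column of M_H (the hypergraphs have the same multiset of hyperedge sizes). -/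
/-!
Let `a` and `b` be the degree vectors of `M` and `N`. Multiplying the two defining equations by the
all-ones vector gives `S₁ *ᵥ a = b` and `S₁ᵀ *ᵥ b = a`. The vectors of column sums
satisfy the same with `S₂`, the roles of `M` and `N` being swapped.
Two vectors related in this way by a doubly stochastic matrix `S` have
`b ⬝ᵥ b = b ⬝ᵥ S *ᵥ a = a ⬝ᵥ a`, and hence `∑ i j, S i j * (b i - a j) ^ 2 = 0`, so that
`b i = a j` wherever `S i j ≠ 0` (`eq_of_entry_ne_zero`). By Birkhoff's theorem the support of `S`
contains the graph of a permutation, which therefore carries one vector to the other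
(`exists_perm_of_mulVec`).
-/

open Matrix

lemma DoublyStochastic.mulVec_one {n : Type*} [Fintype n] {S : Matrix n n ℝ}
    (hS : DoublyStochastic S) : S *ᵥ 1 = 1 := by
  ext i
  simpa [mulVec, dotProduct] using hS.2.1 i

lemma DoublyStochastic.one_vecMul {n : Type*} [Fintype n] {S : Matrix n n ℝ}
    (hS : DoublyStochastic S) : 1 ᵥ* S = 1 := by
  ext j
  simpa [vecMul, dotProduct] using hS.2.2 j

/-- The equality case of the fact that averaging by `S` does not increase the sum of squares. -/
lemma eq_of_entry_ne_zero {n : Type*} [Fintype n] {S : Matrix n n ℝ} (hS : DoublyStochastic S)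
    {a b : n → ℝ} (hb : S *ᵥ a = b) (ha : b ᵥ* S = a) {i j : n} (hij : S i j ≠ 0) :
    b i = a j := by
  have hrow : ∑ i, ∑ j, S i j * b i ^ 2 = ∑ i, b i ^ 2 := by
    simp only [← Finset.sum_mul, hS.2.1, one_mul]
  have hcol : ∑ i, ∑ j, S i j * a j ^ 2 = ∑ j, a j ^ 2 := by
    rw [Finset.sum_comm]
    simp only [← Finset.sum_mul, hS.2.2, one_mul]
  have hmix_b : ∑ i, ∑ j, b i * S i j * a j = ∑ i, b i ^ 2 := by
    refine Finset.sum_congr rfl fun i _ => ?_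
    conv_rhs => rw [sq]; arg 2; rw [← hb]
    simp only [mulVec, dotProduct, Finset.mul_sum, mul_assoc]
  have hmix_a : ∑ i, ∑ j, b i * S i j * a j = ∑ j, a j ^ 2 := by
    rw [Finset.sum_comm]
    refine Finset.sum_congr rfl fun j _ => ?_
    conv_rhs => rw [sq]; arg 1; rw [← ha]
    simp only [vecMul, dotProduct, Finset.sum_mul]
  have hexpand : ∑ i, ∑ j, S i j * (b i - a j) ^ 2 =
      ∑ i, ∑ j, S i j * b i ^ 2 - 2 * ∑ i, ∑ j, b i * S i j * a j
        + ∑ i, ∑ j, S i j * a j ^ 2 := by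
    simp only [Finset.mul_sum, ← Finset.sum_sub_distrib, ← Finset.sum_add_distrib]
    exact Finset.sum_congr rfl fun i _ => Finset.sum_congr rfl fun j _ => by ring
  have hzero : ∑ i, ∑ j, S i j * (b i - a j) ^ 2 = 0 := by linarith
  have hnonneg : ∀ i j, 0 ≤ S i j * (b i - a j) ^ 2 := fun i j =>
    mul_nonneg (hS.1 i j) (sq_nonneg _)
  have hi := (Finset.sum_eq_zero_iff_of_nonneg
    fun i _ => Finset.sum_nonneg fun j _ => hnonneg i j).1 hzero i (Finset.mem_univ i)
  have hj := (Finset.sum_eq_zero_iff_of_nonneg fun j _ => hnonneg i j).1 hi j (Finset.mem_univ j)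
  exact sub_eq_zero.1 (pow_eq_zero_iff two_ne_zero |>.1 ((mul_eq_zero.1 hj).resolve_left hij))

/-- A consequence of Birkhoff's theorem: any permutation of positive weight in a decomposition
of `S` into permutation matrices works. -/
lemma exists_perm_entry_ne_zero {n : Type*} [Fintype n] [DecidableEq n] {S : Matrix n n ℝ}
    (hS : DoublyStochastic S) : ∃ σ : Equiv.Perm n, ∀ i, S i (σ i) ≠ 0 := by
  obtain ⟨w, hw, hsum, hSw⟩ := exists_eq_sum_perm_of_mem_doublyStochastic
    (mem_doublyStochastic_iff_sum.2 hS)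
  obtain ⟨σ, -, hσ⟩ : ∃ σ ∈ Finset.univ, w σ ≠ 0 :=
    Finset.exists_ne_zero_of_sum_ne_zero (by rw [hsum]; exact one_ne_zero)
  refine ⟨σ, fun i => ne_of_gt ?_⟩
  calc 0 < w σ := lt_of_le_of_ne (hw σ) hσ.symm
    _ = (w σ • σ.permMatrix ℝ) i (σ i) := by simp [Equiv.Perm.permMatrix]
    _ ≤ ∑ τ, (w τ • τ.permMatrix ℝ) i (σ i) := by
        refine Finset.single_le_sum (f := fun τ : Equiv.Perm n =>
          (w τ • τ.permMatrix ℝ) i (σ i)) (fun τ _ => ?_) (Finset.mem_univ σ)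
        simp only [Matrix.smul_apply, smul_eq_mul, Equiv.Perm.permMatrix, PEquiv.toMatrix_apply]
        exact mul_nonneg (hw τ) (by split_ifs <;> norm_num)
    _ = S i (σ i) := by rw [← hSw, Matrix.sum_apply]

lemma exists_perm_of_mulVec {n : Type*} [Fintype n] [DecidableEq n] {S : Matrix n n ℝ}
    (hS : DoublyStochastic S) {a b : n → ℝ} (hb : S *ᵥ a = b) (ha : b ᵥ* S = a) :
    ∃ σ : Equiv.Perm n, ∀ i, b i = a (σ i) := by
  obtain ⟨σ, hσ⟩ := exists_perm_entry_ne_zero hS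
  exact ⟨σ, fun i => eq_of_entry_ne_zero hS hb ha (hσ i)⟩

theorem fracIso_same_degrees_and_sizes {n m : ℕ}
    (M N : Matrix (Fin n) (Fin m) ℝ)
    (hM01 : ∀ i j, M i j = 0 ∨ M i j = 1) (hN01 : ∀ i j, N i j = 0 ∨ N i j = 1)
    (h : FracIso M N) :
    (∃ σ : Equiv.Perm (Fin n), ∀ i, ∑ j, M i j = ∑ j, N (σ i) j) ∧
    (∃ π : Equiv.Perm (Fin m), ∀ j, ∑ i, M i j = ∑ i, N i (π j)) := by
  obtain ⟨S₁, S₂, h₁, h₂, hSM, hMS⟩ := h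
  constructor
  · have hb : S₁ *ᵥ (M *ᵥ 1) = N *ᵥ 1 := by
      rw [mulVec_mulVec, hSM, ← mulVec_mulVec, mulVec_transpose, h₂.one_vecMul]
    have ha : (N *ᵥ 1) ᵥ* S₁ = M *ᵥ 1 := by
      rw [← mulVec_transpose, mulVec_mulVec, ← hMS, ← mulVec_mulVec, h₂.mulVec_one]
    obtain ⟨σ, hσ⟩ := exists_perm_of_mulVec h₁ hb ha
    -- `σ` matches the rows of `N` to those of `M`, so its inverse is the required permutation.
    refine ⟨σ.symm, fun i => ?_⟩
    simpa [mulVec, dotProduct] using (hσ (σ.symm i)).symm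
  · have hb : S₂ *ᵥ (1 ᵥ* N) = 1 ᵥ* M := by
      rw [← vecMul_transpose, vecMul_vecMul, ← hSM, ← vecMul_vecMul, h₁.one_vecMul]
    have ha : (1 ᵥ* M) ᵥ* S₂ = 1 ᵥ* N := by
      rw [vecMul_vecMul, hMS, ← vecMul_vecMul, vecMul_transpose, h₁.mulVec_one]
    obtain ⟨π, hπ⟩ := exists_perm_of_mulVec h₂ hb ha
    refine ⟨π, fun j => ?_⟩
    simpa [vecMul, dotProduct] using hπ j
end

section
/- Let V and E be finite types and let M_G and M_H be real matrices with rows indexed by V and columns indexed by E, all entries in {0,1}. Say that G and H have a common equitable partition if there exist natural numbers s and r, functions fV, hV : V → Fin s and fE, hE : E → Fin r, and functions D, U : Fin s → Fin r → ℕ such that: for every i, the number of x ∈ V with fV x = i equals the number of x with hV x = i; for every j, the number of e ∈ E with fE e = j equals the number of e with hE e = j; for every x ∈ V and every j, the number of e with fE e = j and M_G x e = 1 equals D (fV x) j, and the number of e with hE e = j and M_H x e = 1 equals D (hV x) j; and for every e ∈ E and every i, the number of x with fV x = i and M_G x e = 1 equals U i (fE e), and the number of x with hV x = i and M_H x e =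 1 equals U i (hE e). Then M_G ≡ M_H if and only if G and H have a common equitable partition. -/
/-!
**From a fractional isomorphism to a common equitable partition.** View a doubly stochastic `S` as
a weighted bipartite graph between two copies of its index type; the colour classes are the
connected components of its support. For an edge class `j`, let `a` and `b` be the vectors counting
the hyperedges of class `j` at each vertex of `G` and of `H`. The indicator vectors of class `j` are
exchanged by `S₂ᵀ` and `S₂`, so the two matrix equations give `b = S₁ a` and `a = S₁ᵀ b`. Then
`∑ S₁ y x (b y - a x)² = ‖b‖² + ‖a‖² - 2 ⟨b, S₁ a⟩ = 0`, so the counts agree along every edge of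
the support of `S₁`, hence are constant on its components (`DoublyStochastic.eq_of_pos`,
`degree_eq_of_pos`). Counts of vertices in hyperedges follow by transposing.

**From a common equitable partition to a fractional isomorphism.** Take the matrix that spreads
weight uniformly over each pair of corresponding classes (`classAverage`). Both matrix
equations reduce to the double count `nᵢ Dᵢⱼ = mⱼ Uᵢⱼ` of the incidences between classes `i` and `j`
(`double_count`).
-/

open Matrix

/-- Two hypergraphs (given by their vertex-hyperedge incidence matrices) have a common
equitable partition. -/
def CommonEquitablePartition {V E : Type*} [Fintype V] [Fintype E]
    (MG MH : Matrix V E ℝ) : Prop :=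
  ∃ (s r : ℕ) (fV hV : V → Fin s) (fE hE : E → Fin r) (D U : Fin s → Fin r → ℕ),
    (∀ i : Fin s, Nat.card {x : V // fV x = i} = Nat.card {x : V // hV x = i}) ∧
    (∀ j : Fin r, Nat.card {e : E // fE e = j} = Nat.card {e : E // hE e = j}) ∧
    (∀ (x : V) (j : Fin r),
      Nat.card {e : E // fE e = j ∧ MG x e = 1} = D (fV x) j ∧
      Nat.card {e : E // hE e = j ∧ MH x e = 1} = D (hV x) j) ∧
    (∀ (e : E) (i : Fin s),
      Nat.card {x : V // fV x = i ∧ MG x e = 1} = U i (fE e) ∧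
      Nat.card {x : V // hV x = i ∧ MH x e = 1} = U i (hE e))

open Classical in
lemma card_fiber_eq_sum {n : Type*} [Fintype n] {k : ℕ} (f : n → Fin k) (j : Fin k) :
    (Nat.card {x : n // f x = j} : ℝ) = ∑ x, if f x = j then (1 : ℝ) else 0 := by
  rw [Nat.card_eq_fintype_card, Fintype.card_subtype, Finset.sum_boole]

open Classical in
lemma card_fiber_and_eq_sum {n : Type*} [Fintype n] {k : ℕ} (f : n → Fin k) (j : Fin k)
    (v : n → ℝ) (hv : ∀ x, v x = 0 ∨ v x = 1) :
    (Nat.card {x : n // f x = j ∧ v x = 1} : ℝ) = ∑ x, if f x = j then v x else 0 := by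
  rw [Nat.card_eq_fintype_card, Fintype.card_subtype, ← Finset.sum_boole]
  refine Finset.sum_congr rfl fun x _ => ?_
  rcases hv x with h | h <;> simp [h]

lemma DoublyStochastic.transpose {n : Type*} [Fintype n] {S : Matrix n n ℝ}
    (hS : DoublyStochastic S) : DoublyStochastic Sᵀ :=
  ⟨fun i j => hS.1 j i, hS.2.2, hS.2.1⟩

/-- If `b = S a` and `a = Sᵀ b` with `S` doubly stochastic, then `a` and `b` agree along the support
of `S`, because the Dirichlet energy `∑ S y x (b y - a x)²` vanishes. -/
lemma DoublyStochastic.eq_of_pos {n : Type*} [Fintype n] {S : Matrix n n ℝ}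
    (hS : DoublyStochastic S) {a b : n → ℝ} (hb : b = S *ᵥ a) (ha : a = Sᵀ *ᵥ b)
    {y x : n} (hyx : 0 < S y x) : b y = a x := by
  have hb' : ∀ y, ∑ x, S y x * a x = b y := fun y => by
    conv_rhs => rw [hb]
    rfl
  have ha' : ∀ x, ∑ y, S y x * b y = a x := fun x => by
    conv_rhs => rw [ha]
    rfl
  have e1 : ∑ y, ∑ x, S y x * (b y - a x) * b y = 0 := by
    refine Finset.sum_eq_zero fun y _ => ?_
    rw [← Finset.sum_mul]
    simp only [mul_sub, Finset.sum_sub_distrib, hb', ← Finset.sum_mul, hS.2.1]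
    ring
  have e2 : ∑ y, ∑ x, S y x * (b y - a x) * a x = 0 := by
    rw [Finset.sum_comm]
    refine Finset.sum_eq_zero fun x _ => ?_
    rw [← Finset.sum_mul]
    simp only [mul_sub, Finset.sum_sub_distrib, ha', ← Finset.sum_mul, hS.2.2]
    ring
  have e : ∑ y, ∑ x, S y x * (b y - a x) ^ 2 = 0 := by
    rw [← sub_zero (0 : ℝ)]
    nth_rewrite 1 [← e1]
    rw [← e2]
    simp only [← Finset.sum_sub_distrib]
    exact Finset.sum_congr rfl fun y _ => Finset.sum_congr rfl fun x _ => by ring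
  have h0 : ∀ y x, 0 ≤ S y x * (b y - a x) ^ 2 := fun y x => mul_nonneg (hS.1 y x) (sq_nonneg _)
  have h1 := (Finset.sum_eq_zero_iff_of_nonneg
    (fun y _ => Finset.sum_nonneg fun x _ => h0 y x)).1 e y (Finset.mem_univ _)
  have h2 := (Finset.sum_eq_zero_iff_of_nonneg (fun x _ => h0 y x)).1 h1 x (Finset.mem_univ _)
  have h3 := (mul_eq_zero.1 h2).resolve_left hyx.ne'
  exact sub_eq_zero.1 (pow_eq_zero_iff two_ne_zero |>.1 h3)

/-- The connected components of the bipartite support graph of `S`: `h` colours the rows and `f` the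
columns, and any pair of labellings compatible with the support factors through the colours. -/
lemma exists_components {n : Type*} [Fintype n] (S : Matrix n n ℝ) :
    ∃ (k : ℕ) (f h : n → Fin k), (∀ y x, 0 < S y x → h y = f x) ∧
      ∀ a b : n → ℕ, (∀ y x, 0 < S y x → b y = a x) →
        ∃ D : Fin k → ℕ, (∀ x, a x = D (f x)) ∧ ∀ y, b y = D (h y) := by
  let r : n ⊕ n → n ⊕ n → Prop := fun p q => ∃ y x, p = Sum.inl y ∧ q = Sum.inr x ∧ 0 < S y x
  have : Finite (Quot r) := Finite.of_surjective (Quot.mk r) Quot.mk_surjective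
  obtain ⟨k, ⟨φ⟩⟩ := Finite.exists_equiv_fin (Quot r)
  refine ⟨k, fun x => φ (Quot.mk r (Sum.inr x)), fun y => φ (Quot.mk r (Sum.inl y)),
    fun y x hyx => congrArg φ (Quot.sound ⟨y, x, rfl, rfl, hyx⟩), fun a b hab => ?_⟩
  have hr : ∀ p q, r p q → Sum.elim b a p = Sum.elim b a q := by
    rintro _ _ ⟨y, x, rfl, rfl, hyx⟩
    exact hab y x hyx
  exact ⟨fun i => Quot.lift (Sum.elim b a) hr (φ.symm i), fun x => by simp, fun y => by simp⟩

/-- When the colourings `f` of the columns and `h` of the rows agree along the support of `S`, the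
matrix `S` sends the indicator of a column class to the indicator of the row class of the same
colour. -/
lemma DoublyStochastic.mulVec_indicator {n : Type*} [Fintype n] {S : Matrix n n ℝ}
    (hS : DoublyStochastic S) {k : ℕ} {f h : n → Fin k} (hfh : ∀ y x, 0 < S y x → h y = f x)
    (j : Fin k) :
    S *ᵥ (fun x => if f x = j then (1 : ℝ) else 0) = fun y => if h y = j then (1 : ℝ) else 0 := by
  funext y
  have : ∀ x, S y x * (if f x = j then (1 : ℝ) else 0) =
      S y x * (if h y = j then (1 : ℝ) else 0) := fun x => by
    rcases (hS.1 y x).eq_or_lt with h0 | h0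
    · simp [← h0]
    · rw [hfh y x h0]
  simp only [mulVec, dotProduct, this]
  rw [← Finset.sum_mul, hS.2.1, one_mul]

lemma DoublyStochastic.card_fiber_eq {n : Type*} [Fintype n] {S : Matrix n n ℝ}
    (hS : DoublyStochastic S) {k : ℕ} {f h : n → Fin k} (hfh : ∀ y x, 0 < S y x → h y = f x)
    (j : Fin k) : Nat.card {x : n // f x = j} = Nat.card {x : n // h x = j} := by
  have key : (Nat.card {x : n // f x = j} : ℝ) = Nat.card {x : n // h x = j} := by
    rw [card_fiber_eq_sum, card_fiber_eq_sum]
    have hm := hS.mulVec_indicator hfh j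
    have : ∀ y, (if h y = j then (1 : ℝ) else 0) = ∑ x, S y x * (if f x = j then (1 : ℝ) else 0) :=
      fun y => (congrFun hm y).symm
    rw [Finset.sum_congr rfl fun y _ => this y, Finset.sum_comm]
    simp only [← Finset.sum_mul, hS.2.2, one_mul]
  exact_mod_cast key

/-- Rows `y` of `N` and `x` of `M` joined by the support of `S` have the same number of ones in the
columns of each colour, where `h` colours the columns of `N` and `f` those of `M`. -/
lemma degree_eq_of_pos {n m : Type*} [Fintype n] [Fintype m] {M N : Matrix n m ℝ}
    (hM : ∀ x e, M x e = 0 ∨ M x e = 1) (hN : ∀ x e, N x e = 0 ∨ N x e = 1)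
    {S : Matrix n n ℝ} {T : Matrix m m ℝ} (hS : DoublyStochastic S) (hT : DoublyStochastic T)
    (h1 : S * M = N * T) (h2 : M * Tᵀ = Sᵀ * N) {k : ℕ} {f h : m → Fin k}
    (hfh : ∀ y x, 0 < T y x → h y = f x) (j : Fin k) {y x : n} (hyx : 0 < S y x) :
    Nat.card {e : m // h e = j ∧ N y e = 1} = Nat.card {e : m // f e = j ∧ M x e = 1} := by
  have hF := hT.mulVec_indicator hfh j
  have hH := hT.transpose.mulVec_indicator (f := h) (h := f) (fun y x hyx => (hfh x y hyx).symm) j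
  have hb : N *ᵥ (fun e => if h e = j then (1 : ℝ) else 0) =
      S *ᵥ (M *ᵥ (fun e => if f e = j then (1 : ℝ) else 0)) := by
    rw [← hF, mulVec_mulVec, mulVec_mulVec, h1]
  have ha : M *ᵥ (fun e => if f e = j then (1 : ℝ) else 0) =
      Sᵀ *ᵥ (N *ᵥ (fun e => if h e = j then (1 : ℝ) else 0)) := by
    rw [← hH, mulVec_mulVec, mulVec_mulVec, h2]
  have key := hS.eq_of_pos hb ha hyx
  simp only [mulVec, dotProduct, mul_ite, mul_one, mul_zero] at key
  rw [← card_fiber_and_eq_sum h j _ (hN y), ← card_fiber_and_eq_sum f j _ (hM x)] at key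
  exact_mod_cast key

/-- The matrix that spreads weight uniformly between the `h`-class and the `f`-class of each
colour. -/
noncomputable def classAverage {n : Type*} {k : ℕ} (f h : n → Fin k) : Matrix n n ℝ :=
  fun y x => if f x = h y then (Nat.card {z : n // f z = h y} : ℝ)⁻¹ else 0

lemma classAverage_transpose {n : Type*} {k : ℕ} (f h : n → Fin k)
    (hfh : ∀ i, Nat.card {x : n // f x = i} = Nat.card {x : n // h x = i}) :
    (classAverage f h)ᵀ = classAverage h f := by
  ext x y
  by_cases hxy : f x = h y
  · simp [classAverage, hxy, hfh]
  · simp [classAverage, hxy, Ne.symm hxy]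

lemma sum_classAverage_row {n : Type*} [Fintype n] {k : ℕ} (f h : n → Fin k)
    (hfh : ∀ i, Nat.card {x : n // f x = i} = Nat.card {x : n // h x = i}) (y : n) :
    ∑ x, classAverage f h y x = 1 := by
  have hpos : (Nat.card {z : n // f z = h y} : ℝ) ≠ 0 := by
    rw [hfh]
    have : Nonempty {z : n // h z = h y} := ⟨⟨y, rfl⟩⟩
    exact_mod_cast Nat.card_pos.ne'
  have : ∀ x, classAverage f h y x =
      (Nat.card {z : n // f z = h y} : ℝ)⁻¹ * if f x = h y then 1 else 0 := fun x => by
    simp [classAverage]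
  rw [Finset.sum_congr rfl fun x _ => this x, ← Finset.mul_sum, ← card_fiber_eq_sum,
    inv_mul_cancel₀ hpos]

lemma doublyStochastic_classAverage {n : Type*} [Fintype n] {k : ℕ} (f h : n → Fin k)
    (hfh : ∀ i, Nat.card {x : n // f x = i} = Nat.card {x : n // h x = i}) :
    DoublyStochastic (classAverage f h) := by
  refine ⟨fun y x => ?_, sum_classAverage_row f h hfh, fun x => ?_⟩
  · unfold classAverage
    split_ifs <;> positivity
  · rw [← sum_classAverage_row h f (fun i => (hfh i).symm) x, ← classAverage_transpose f h hfh]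
    rfl

lemma classAverage_mul_apply {n m : Type*} [Fintype n] {k : ℕ} (f h : n → Fin k)
    (M : Matrix n m ℝ) (hM : ∀ x e, M x e = 0 ∨ M x e = 1) (y : n) (e : m) :
    (classAverage f h * M) y e = (Nat.card {z : n // f z = h y} : ℝ)⁻¹ *
      Nat.card {x : n // f x = h y ∧ M x e = 1} := by
  rw [card_fiber_and_eq_sum f (h y) (fun x => M x e) (fun x => hM x e), Finset.mul_sum, mul_apply]
  exact Finset.sum_congr rfl fun x _ => by simp [classAverage]

/-- Counting the incidences between vertex class `i` and edge class `j` in two ways. -/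
lemma double_count {n m : Type*} [Fintype n] [Fintype m] {M : Matrix n m ℝ}
    (hM : ∀ x e, M x e = 0 ∨ M x e = 1) {s r : ℕ} {f : n → Fin s} {g : m → Fin r}
    {D U : Fin s → Fin r → ℕ}
    (hD : ∀ x j, Nat.card {e : m // g e = j ∧ M x e = 1} = D (f x) j)
    (hU : ∀ e i, Nat.card {x : n // f x = i ∧ M x e = 1} = U i (g e)) (i : Fin s) (j : Fin r) :
    (Nat.card {x : n // f x = i} : ℝ) * D i j = Nat.card {e : m // g e = j} * U i j := by
  have hD' : ∀ x, (if f x = i then (1 : ℝ) else 0) * D i j =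
      ∑ e, if f x = i then (if g e = j then M x e else 0) else 0 := fun x => by
    split_ifs with hx
    · rw [← card_fiber_and_eq_sum g j _ (hM x), hD, hx, one_mul]
    · simp
  have hU' : ∀ e, (if g e = j then (1 : ℝ) else 0) * U i j =
      ∑ x, if f x = i then (if g e = j then M x e else 0) else 0 := fun e => by
    split_ifs with he
    · rw [← card_fiber_and_eq_sum f i (fun x => M x e) (fun x => hM x e), hU, he, one_mul]
    · simp
  rw [card_fiber_eq_sum, card_fiber_eq_sum, Finset.sum_mul, Finset.sum_mul,
    Finset.sum_congr rfl fun x _ => hD' x, Finset.sum_congr rfl fun e _ => hU' e, Finset.sum_comm]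

/-- The two sides of `S₁ M_G = M_H S₂ᵀ` for class-averaging matrices. -/
lemma classAverage_mul_eq {n m : Type*} [Fintype n] [Fintype m] {M N : Matrix n m ℝ}
    (hM : ∀ x e, M x e = 0 ∨ M x e = 1) (hN : ∀ x e, N x e = 0 ∨ N x e = 1)
    {s r : ℕ} {f h : n → Fin s} {g l : m → Fin r} {D U : Fin s → Fin r → ℕ}
    (hfh : ∀ i, Nat.card {x : n // f x = i} = Nat.card {x : n // h x = i})
    (hgl : ∀ i, Nat.card {x : m // g x = i} = Nat.card {x : m // l x = i})
    (hDM : ∀ x j, Nat.card {e : m // g e = j ∧ M x e = 1} = D (f x) j)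
    (hUM : ∀ e i, Nat.card {x : n // f x = i ∧ M x e = 1} = U i (g e))
    (hDN : ∀ x j, Nat.card {e : m // l e = j ∧ N x e = 1} = D (h x) j) :
    classAverage f h * M = N * classAverage g l := by
  ext y e
  have hR : (N * classAverage g l) y e = (classAverage l g * Nᵀ) e y := by
    rw [← classAverage_transpose g l hgl, ← transpose_mul, transpose_apply]
  rw [hR, classAverage_mul_apply f h M hM, classAverage_mul_apply l g Nᵀ (fun e x => hN x e)]
  simp only [transpose_apply]
  rw [hUM, hDN, ← hgl]
  have hy : (Nat.card {z : n // f z = h y} : ℝ) ≠ 0 := by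
    rw [hfh]
    have : Nonempty {z : n // h z = h y} := ⟨⟨y, rfl⟩⟩
    exact_mod_cast Nat.card_pos.ne'
  have he : (Nat.card {z : m // g z = g e} : ℝ) ≠ 0 := by
    have : Nonempty {z : m // g z = g e} := ⟨⟨e, rfl⟩⟩
    exact_mod_cast Nat.card_pos.ne'
  have := double_count hM hDM hUM (h y) (g e)
  field_simp
  linarith

theorem fracIso_iff_commonEquitablePartition {V E : Type*} [Fintype V] [Fintype E]
    (MG MH : Matrix V E ℝ)
    (hG01 : ∀ x e, MG x e = 0 ∨ MG x e = 1) (hH01 : ∀ x e, MH x e = 0 ∨ MH x e = 1) :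
    FracIso MG MH ↔ CommonEquitablePartition MG MH := by
  constructor
  · rintro ⟨S₁, S₂, hS₁, hS₂, h1, h2⟩
    -- `S₂ᵀ`, like `S₁`, has rows on the `H` side and columns on the `G` side.
    obtain ⟨s, fV, hV, hVc, hVD⟩ := exists_components S₁
    obtain ⟨r, fE, hE, hEc, hED⟩ := exists_components S₂ᵀ
    have hT := hS₂.transpose
    have h1' : S₂ᵀ * MGᵀ = MHᵀ * S₁ := by
      simpa only [transpose_mul, transpose_transpose] using congrArg transpose h2
    have h2' : MGᵀ * S₁ᵀ = S₂ᵀᵀ * MHᵀ := by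
      simpa only [transpose_mul, transpose_transpose] using congrArg transpose h1
    have hD := fun j => hVD (fun x => Nat.card {e : E // fE e = j ∧ MG x e = 1})
      (fun y => Nat.card {e : E // hE e = j ∧ MH y e = 1})
      fun y x hyx => degree_eq_of_pos hG01 hH01 hS₁ hT h1 h2 hEc j hyx
    have hU := fun i => hED (fun e => Nat.card {x : V // fV x = i ∧ MG x e = 1})
      (fun e => Nat.card {x : V // hV x = i ∧ MH x e = 1})
      fun y x hyx => degree_eq_of_pos (M := MGᵀ) (N := MHᵀ) (fun e x => hG01 x e)
        (fun e x => hH01 x e) hT hS₁ h1' h2' hVc i hyx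
    choose D hDG hDH using hD
    choose U hUG hUH using hU
    exact ⟨s, r, fV, hV, fE, hE, fun i j => D j i, U, hS₁.card_fiber_eq hVc, hT.card_fiber_eq hEc,
      fun x j => ⟨hDG j x, hDH j x⟩, fun e i => ⟨hUG i e, hUH i e⟩⟩
  · rintro ⟨s, r, fV, hV, fE, hE, D, U, cV, cE, hD, hU⟩
    refine ⟨classAverage fV hV, classAverage hE fE, doublyStochastic_classAverage _ _ cV,
      doublyStochastic_classAverage _ _ fun j => (cE j).symm, ?_, ?_⟩
    · rw [classAverage_transpose _ _ fun j => (cE j).symm]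
      exact classAverage_mul_eq hG01 hH01 cV cE (fun x j => (hD x j).1) (fun e i => (hU e i).1)
        fun x j => (hD x j).2
    -- The same identity with the roles of `G` and `H` exchanged.
    · rw [classAverage_transpose _ _ cV]
      exact (classAverage_mul_eq hH01 hG01 (fun i => (cV i).symm) (fun j => (cE j).symm)
        (fun x j => (hD x j).2) (fun e i => (hU e i).2) fun x j => (hD x j).1).symm
end

section
/- Let M_G and M_H be n×m real matrices and let S₁, S₂ be doubly stochastic matrices with S₁ * M_G = M_H * S₂ᵀ and M_G * S₂ = S₁ᵀ * M_H. Then there exists a doubly stochastic matrix S of size (n+m)×(n+m) (indexed by Fin n ⊕ Fin m) such that A * S = S * B, where A is the block matrix with blocks [0, M_G; M_Gᵀ, 0] and B is the block matrix with blocks [0, M_H; M_Hᵀ, 0] (these are the adjacency matrices of the bipartite graphs representing the hypergraphs G and H). In other words, if two hypergraphs are fractionally isomorphic, then their bipartite representations are fractionally isomorphic graphs. -/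
open Matrix

theorem bipartite_representation_frac_iso {n m : ℕ}
    (MG MH : Matrix (Fin n) (Fin m) ℝ)
    (S₁ : Matrix (Fin n) (Fin n) ℝ) (S₂ : Matrix (Fin m) (Fin m) ℝ)
    (hS₁ : DoublyStochastic S₁) (hS₂ : DoublyStochastic S₂)
    (h1 : S₁ * MG = MH * S₂ᵀ) (h2 : MG * S₂ = S₁ᵀ * MH) :
    ∃ S : Matrix (Fin n ⊕ Fin m) (Fin n ⊕ Fin m) ℝ,
      DoublyStochastic S ∧
      Matrix.fromBlocks 0 MG MGᵀ 0 * S = S * Matrix.fromBlocks 0 MH MHᵀ 0 := by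
  -- The diagonal blocks of `A * S = S * B` vanish; the off-diagonal ones are `h2` and `h1ᵀ`.
  refine ⟨Matrix.fromBlocks S₁ᵀ 0 0 S₂, ⟨?_, ?_, ?_⟩, ?_⟩
  · rintro (i | i) (j | j) <;> simp [hS₁.1, hS₂.1]
  · rintro (i | i) <;> simp [hS₁.2.2, hS₂.2.1]
  · rintro (j | j) <;> simp [hS₁.2.1, hS₂.2.2]
  · have h1t : MGᵀ * S₁ᵀ = S₂ * MHᵀ := by
      simpa only [transpose_mul, transpose_transpose] using congrArg transpose h1
    simp [fromBlocks_multiply, h2, h1t]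
end
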